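/- Fix a ∈ ℤ and let u, v, w ∈ Ḣ^∞_⋄ (smooth divergence-free mean-zero vector fields). Then: (i) ‖B[u,v]‖_{Ḣ^a} ≤ ‖u vᵀ‖_{Ḣ^{a+1}}, where ‖u vᵀ‖²_{Ḣ^{a+1}} = Σ_{i,j=1}^{2} ‖u_i v_j‖²_{Ḣ^{a+1}}; (ii) |⟨B[u,v], w⟩_{Ḣ^a}| ≲ min{ ‖u‖_{B^{|a|}} ‖v‖_{Ḣ^a}, ‖u‖_{Ḣ^a} ‖v‖_{B^{|a|}} } · ‖w‖_{Ḣ^{a+1}}, where B^ℓ = C^ℓ(Ω)² for 0 ≤ ℓ ≤ 1 and B^ℓ = Ḣ^ℓ for ℓ ≥ 2. These estimates extend by density to u, v, w of the Sobolev regularity prescribed by each inequality. -/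

import Mathlib

open MeasureTheory Set
open scoped BigOperators

noncomputable section

namespace NS2D

/-- Nonzero Fourier frequencies of the 2D torus `Ω = 𝕋²`. -/
def Freq : Type := {k : ℤ × ℤ // k ≠ 0}

/-- Squared Euclidean modulus `|k|²` of a frequency. -/
def knormSq (k : Freq) : ℝ := (k.1.1 : ℝ) ^ 2 + (k.1.2 : ℝ) ^ 2

/-- Eigenvalue `λ_k = 4π²|k|²` of the periodic Laplacian `−Δ`. -/
def lam (k : Freq) : ℝ := 4 * Real.pi ^ 2 * knormSq k

/-- A divergence-free mean-zero vector field `u ∈ Ḣ_⋄` (or, more generally, an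
element of the scale `Ḣ^α_⋄`) on the torus is represented by its Fourier
coefficients `c k` along the orthonormal basis
`e_k(x) = |k|⁻¹ (k₂, −k₁) exp(2πi k·x)` of divergence-free fields. -/
abbrev Coef : Type := Freq → ℂ

/-- Negation of a frequency. -/
def fneg (k : Freq) : Freq := ⟨-k.1, neg_ne_zero.mpr k.2⟩

/-- The conjugacy condition expressing that the coefficients `c` represent a
real-valued vector field (note `e_{−k} = − conj e_k`). -/
def IsReal (c : Coef) : Prop := ∀ k, c (fneg k) = - (starRingEnd ℂ) (c k)

/-- Squared homogeneous Sobolev norm `‖·‖²_{Ḣ^α} = Σ_k λ_k^α |c k|²`. -/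
def hSq (α : ℝ) (c : Coef) : ℝ := ∑' k, lam k ^ α * ‖c k‖ ^ 2

/-- Homogeneous Sobolev norm `‖·‖_{Ḣ^α}`. -/
def hN (α : ℝ) (c : Coef) : ℝ := Real.sqrt (hSq α c)

/-- Finiteness of the `Ḣ^α`-norm. -/
def FinH (α : ℝ) (c : Coef) : Prop := Summable fun k => lam k ^ α * ‖c k‖ ^ 2

/-- Membership in `Ḣ^α_⋄` (real-valued field with finite `Ḣ^α`-norm). -/
def MemH (α : ℝ) (c : Coef) : Prop := IsReal c ∧ FinH α c

/-- Membership in `Ḣ^∞_⋄ = C^∞(Ω)² ∩ Ḣ_⋄`: all Sobolev norms are finite. -/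
def MemHinf (c : Coef) : Prop := ∀ α : ℝ, MemH α c

/-- Real `Ḣ^α` inner product `⟨·,·⟩_{Ḣ^α}` (for real-valued fields). -/
def hInner (α : ℝ) (c d : Coef) : ℝ := ∑' k, lam k ^ α * (c k * (starRingEnd ℂ) (d k)).re

/-- The `L²` inner product. -/
def innerC (c d : Coef) : ℂ := ∑' k, c k * (starRingEnd ℂ) (d k)

/-- The unit vector `(k₂, −k₁)/|k|` spanning the divergence-free direction at
frequency `k`. -/
def evec (k : Freq) : ℝ × ℝ :=
  ((k.1.2 : ℝ) / Real.sqrt (knormSq k), -((k.1.1 : ℝ)) / Real.sqrt (knormSq k))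

/-- Euclidean dot product on `ℝ²`. -/
def dotR (a b : ℝ × ℝ) : ℝ := a.1 * b.1 + a.2 * b.2

/-- A frequency as a real vector. -/
def fvec (k : Freq) : ℝ × ℝ := ((k.1.1 : ℝ), (k.1.2 : ℝ))

/-- Fourier coefficients (along the basis `e_k`) of the Leray-projected
transport nonlinearity `B[u,v] = P[(u·∇)v]`:
`(B[u,v])^(k) · ē_k = 2πi Σ_{m+n=k, n≠0} c_m d_n (e_m·n)(e_n·e_k)`. -/
def Bc (c d : Coef) : Coef := fun k =>
  (((2 * Real.pi : ℝ) : ℂ) * Complex.I) *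
    ∑' m : Freq,
      if h : k.1 - m.1 ≠ 0 then
        c m * d ⟨k.1 - m.1, h⟩ *
          (((dotR (evec m) (fvec ⟨k.1 - m.1, h⟩) *
            dotR (evec ⟨k.1 - m.1, h⟩) (evec k) : ℝ)) : ℂ)
      else 0

/-- The Laplacian `Δ` acting on the scale: `(Δu)^(k) = −λ_k û(k)`. -/
def lapC (c : Coef) : Coef := fun k => -((lam k : ℝ) : ℂ) * c k

/-- Continuity of a trajectory `t ↦ u(t)`, `t ∈ [0,T]`, for the `Ḣ^α`-norm:
`u ∈ C([0,T], Ḣ^α_⋄)`. -/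
def ContH (α : ℝ) (T : ℝ) (u : ℝ → Coef) : Prop :=
  ∀ t ∈ Icc (0:ℝ) T, ∀ ε > 0, ∃ δ > 0, ∀ s ∈ Icc (0:ℝ) T,
    |s - t| < δ → hN α (u s - u t) < ε

/-- Membership `u ∈ L²([0,T], Ḣ^α_⋄)`. -/
def MemL2H (α : ℝ) (T : ℝ) (u : ℝ → Coef) : Prop :=
  (∀ t ∈ Ioc (0:ℝ) T, MemH α (u t)) ∧
    IntegrableOn (fun t => hSq α (u t)) (Ioc 0 T)

/-- `u` is a strong solution on `[0,T]` of the (Leray-projected) periodic 2D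
Navier–Stokes equations `du/dt + νAu + B[u,u] = f`, `u(0) = θ`, posed in `Ḣ_⋄`:
the Fourier coefficients satisfy the corresponding system of ODEs on `(0,T]`,
the trajectory is continuous into `Ḣ¹_⋄` (in particular at `t = 0`), and lies
in `L²([0,T], Ḣ²_⋄)`. -/
structure IsNSSol (ν : ℝ) (f : Coef) (T : ℝ) (θ : Coef) (u : ℝ → Coef) : Prop where
  init : u 0 = θ
  real : ∀ t ∈ Icc (0:ℝ) T, IsReal (u t)
  deriv : ∀ (k : Freq), ∀ t ∈ Ioc (0:ℝ) T,
    HasDerivAt (fun s => u s k)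
      (f k - ((ν * lam k : ℝ) : ℂ) * u t k - Bc (u t) (u t) k) t
  contH1 : ContH 1 T u
  memL2H2 : MemL2H 2 T u

/-- `U` solves the linear parabolic equation
`dU/dt − νΔU + B[u₀, U] + B[U, u₁] = g`, `U(0) = ξ`, on `[0,T]`. -/
structure IsLinPSol (ν : ℝ) (u₀ u₁ : ℝ → Coef) (g : ℝ → Coef) (T : ℝ) (ξ : Coef)
    (U : ℝ → Coef) : Prop where
  init : U 0 = ξ
  real : ∀ t ∈ Icc (0:ℝ) T, IsReal (U t)
  deriv : ∀ (k : Freq), ∀ t ∈ Ioc (0:ℝ) T,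
    HasDerivAt (fun s => U s k)
      (g t k - ((ν * lam k : ℝ) : ℂ) * U t k - Bc (u₀ t) (U t) k - Bc (U t) (u₁ t) k) t

/-- `U = 𝕀_θ[ξ]` solves the linearisation of Navier–Stokes along the
trajectory `u₀`: `dU/dt − νΔU + B[u₀,U] + B[U,u₀] = 0`, `U(0) = ξ`. -/
def IsLinSol (ν : ℝ) (u₀ : ℝ → Coef) (T : ℝ) (ξ : Coef) (U : ℝ → Coef) : Prop :=
  IsLinPSol ν u₀ u₀ (fun _ => 0) T ξ U

/-- The heat semigroup `S_t = e^{νtΔ}` on the scale `Ḣ^α_⋄`. -/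
def heatS (ν t : ℝ) (c : Coef) : Coef := fun k =>
  ((Real.exp (-(ν * lam k * t)) : ℝ) : ℂ) * c k

/-- Duhamel representation of the solution of the periodic heat equation
`du/dt − νΔu = g`, `u(0) = h`. -/
def heatSol (ν : ℝ) (g : ℝ → Coef) (h : Coef) : ℝ → Coef := fun t k =>
  ((Real.exp (-(ν * lam k * t)) : ℝ) : ℂ) *
    (h k + ∫ s in (0:ℝ)..t, ((Real.exp (ν * lam k * s) : ℝ) : ℂ) * g s k)

/-- Real-linearity of a map on the coefficient space. -/
def IsLinMap (Λ : Coef → Coef) : Prop :=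
  (∀ c d, Λ (c + d) = Λ c + Λ d) ∧ ∀ (r : ℝ) (c : Coef), Λ (r • c) = r • Λ c

/-- `Λ` defines a compact (linear) operator `Ḣ^α_⋄ → Ḣ^β_⋄`: it is linear,
maps `Ḣ^α_⋄` into `Ḣ^β_⋄`, and the image of the `Ḣ^α`-unit ball is totally
bounded for the `Ḣ^β`-norm. -/
def IsCompactOp (α β : ℝ) (Λ : Coef → Coef) : Prop :=
  IsLinMap Λ ∧ (∀ c, MemH α c → MemH β (Λ c)) ∧
    ∀ ε > 0, ∃ S : Finset Coef, ∀ c, MemH α c → hN α c ≤ 1 →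
      ∃ s ∈ S, hN β (Λ c - s) < ε

/-- The index `a* = |a|+1` if `|a| ≤ 1`, `a* = |a|` if `|a| ≥ 2`. -/
def astar (a : ℤ) : ℤ := if |a| ≤ 1 then |a| + 1 else |a|

/-- `i`-th component of the unit vector `evec k`. -/
def evecC (i : Fin 2) (k : Freq) : ℝ := if i = 0 then (evec k).1 else (evec k).2

/-- Fourier coefficients (over all of `ℤ²`) of the scalar component `u_i` of a
divergence-free field with coefficients `c`. -/
def compCoef (i : Fin 2) (c : Coef) : ℤ × ℤ → ℂ := fun n =>
  if h : n ≠ 0 then c ⟨n, h⟩ * ((evecC i ⟨n, h⟩ : ℝ) : ℂ) else 0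

/-- Convolution: Fourier coefficients of a pointwise product of two scalar
functions. -/
def convC (F G : ℤ × ℤ → ℂ) : ℤ × ℤ → ℂ := fun n => ∑' m : ℤ × ℤ, F m * G (n - m)

/-- Squared homogeneous Sobolev norm of a scalar function given by its Fourier
coefficients over `ℤ²`. -/
def hSqScalar (α : ℝ) (F : ℤ × ℤ → ℂ) : ℝ := ∑' k : Freq, lam k ^ α * ‖F k.1‖ ^ 2

/-- `‖u vᵀ‖²_{Ḣ^α} = Σ_{i,j=1}^2 ‖u_i v_j‖²_{Ḣ^α}`. -/
def hSqMat (α : ℝ) (c d : Coef) : ℝ :=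
  ∑ i : Fin 2, ∑ j : Fin 2, hSqScalar α (convC (compCoef i c) (compCoef j d))

/-- The character `exp(2πi k·x)`. -/
def efun (k : Freq) (x : ℝ × ℝ) : ℂ :=
  Complex.exp ((((2 * Real.pi : ℝ)) : ℂ) * Complex.I *
    ((k.1.1 : ℂ) * (x.1 : ℂ) + (k.1.2 : ℂ) * (x.2 : ℂ)))

/-- Pointwise evaluation of the `i`-th component of the field. -/
def evalComp (i : Fin 2) (c : Coef) (x : ℝ × ℝ) : ℂ :=
  ∑' k, c k * ((evecC i k : ℝ) : ℂ) * efun k x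

/-- Supremum norm (`C⁰`-norm) of the field. -/
def c0N (c : Coef) : ℝ := ⨆ x : ℝ × ℝ, max ‖evalComp 0 c x‖ ‖evalComp 1 c x‖

/-- The partial derivative `∂_j` acting on divergence-free fields. -/
def pderiv (j : Fin 2) (c : Coef) : Coef := fun k =>
  (((2 * Real.pi : ℝ) : ℂ) * Complex.I) *
    (if j = 0 then ((k.1.1 : ℤ) : ℂ) else ((k.1.2 : ℤ) : ℂ)) * c k

/-- `C¹`-norm of the field. -/
def c1N (c : Coef) : ℝ := c0N c + c0N (pderiv 0 c) + c0N (pderiv 1 c)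

/-- Norm of the multiplier space `B^ℓ`: `C^ℓ(Ω)²` for `ℓ ≤ 1` and `Ḣ^ℓ` for
`ℓ ≥ 2`. -/
def bN (ℓ : ℕ) (c : Coef) : ℝ :=
  if ℓ = 0 then c0N c else if ℓ = 1 then c1N c else hN (ℓ : ℝ) c

end NS2D

namespace NS2D

/-!
As `u` is divergence-free, `B[u, v] = P div (u ⊗ v)`. At each frequency, Cauchy–Schwarz in the four
components of `u ⊗ v` bounds the divergence by `λ^{1/2} |u ⊗ v|`, which gives (i). By the duality of
`Ḣ^{a-1}` and `Ḣ^{a+1}` with respect to the `Ḣ^a` pairing, (i) reduces (ii) to the bound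
`‖f g‖_{Ḣ^a} ≲ ‖f‖_{B^{|a|}} ‖g‖_{Ḣ^a}` for scalar functions of mean zero. For `a = 0` this is
Hölder's inequality, for `a = 1` the product rule and Poincaré's inequality, and for `a ≥ 2` it
holds because `Ḣ^a` is an algebra, being embedded into the Wiener algebra of absolutely convergent
Fourier series. The case `a < 0` follows by duality.
-/

section Sums

theorem freq_val_injective : Function.Injective fun k : Freq => k.1 := Subtype.val_injective

@[elab_as_elim]
theorem freq_induction {p : ℤ × ℤ → Prop} (zero : p 0) (freq : ∀ k : Freq, p k.1)
    (n : ℤ × ℤ) : p n := by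
  by_cases hn : n = 0
  · rwa [hn]
  · exact freq ⟨n, hn⟩

theorem tsum_freq {E : Type*} [AddCommMonoid E] [TopologicalSpace E] {g : ℤ × ℤ → E}
    (h0 : g 0 = 0) : ∑' k : Freq, g k.1 = ∑' n, g n :=
  freq_val_injective.tsum_eq fun n hn => ⟨⟨n, fun h => hn (h ▸ h0)⟩, rfl⟩

theorem summable_sq_norm {ι E : Type*} [NormedAddCommGroup E] {f : ι → E}
    (hf : Summable fun i => ‖f i‖) : Summable fun i => ‖f i‖ ^ 2 := by
  have h : Memℓp f 1 := (memℓp_gen_iff (by simp)).2 (by simpa using hf)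
  simpa using (memℓp_gen_iff (by simp)).1 (h.of_exponent_ge (p := 2) one_le_two)

theorem summable_mul_and_tsum_mul_le_sqrt_mul_sqrt {ι : Type*} {f g : ι → ℝ}
    (hf : ∀ i, 0 ≤ f i) (hg : ∀ i, 0 ≤ g i) (sf : Summable fun i => f i ^ 2)
    (sg : Summable fun i => g i ^ 2) :
    (Summable fun i => f i * g i) ∧ ∑' i, f i * g i ≤ √(∑' i, f i ^ 2) * √(∑' i, g i ^ 2) := by
  have h := Real.summable_and_inner_le_Lp_mul_Lq_tsum_of_nonneg (p := 2) (q := 2)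
    Real.HolderConjugate.two_two hf hg (by simpa using sf) (by simpa using sg)
  simpa [Real.sqrt_eq_rpow] using h

theorem tsum_sq_norm_le_of_norm_le_add {ι E : Type*} [SeminormedAddCommGroup E] {h a b : ι → E}
    {c : ℝ} (sa : Summable fun i => ‖a i‖ ^ 2) (sb : Summable fun i => ‖b i‖ ^ 2)
    (hle : ∀ i, ‖h i‖ ≤ c * (‖a i‖ + ‖b i‖)) :
    ∑' i, ‖h i‖ ^ 2 ≤ 2 * c ^ 2 * (∑' i, ‖a i‖ ^ 2 + ∑' i, ‖b i‖ ^ 2) := by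
  have hpt (i : ι) : ‖h i‖ ^ 2 ≤ 2 * c ^ 2 * (‖a i‖ ^ 2 + ‖b i‖ ^ 2) := calc
    ‖h i‖ ^ 2 ≤ c ^ 2 * (‖a i‖ + ‖b i‖) ^ 2 := by
      rw [← mul_pow]; exact pow_le_pow_left₀ (norm_nonneg _) (hle i) 2
    _ ≤ c ^ 2 * (2 * (‖a i‖ ^ 2 + ‖b i‖ ^ 2)) := by gcongr; exact add_sq_le
    _ = _ := by ring
  have hs := (sa.add sb).mul_left (2 * c ^ 2)
  rw [← sa.tsum_add sb, ← tsum_mul_left]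
  exact Summable.tsum_le_tsum hpt (hs.of_nonneg_of_le (fun _ => by positivity) hpt) hs

end Sums

section Convolution

variable {F G : ℤ × ℤ → ℂ}

/-- The change of variables `(n, m) ↦ (m, n - m)` that turns the double series of a product of two
Fourier series into the series of their convolution. -/
def convEquiv : (ℤ × ℤ) × (ℤ × ℤ) ≃ (ℤ × ℤ) × (ℤ × ℤ) :=
  (Equiv.prodComm _ _).trans (Equiv.prodShear (Equiv.refl _) Equiv.subRight)

theorem summable_norm_convC_terms (hF : Summable fun n => ‖F n‖)
    (hG : Summable fun n => ‖G n‖) :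
    Summable fun p : (ℤ × ℤ) × (ℤ × ℤ) => ‖F p.2 * G (p.1 - p.2)‖ :=
  convEquiv.summable_iff.2 (hF.mul_norm hG)

theorem summable_norm_convC (hF : Summable fun n => ‖F n‖) (hG : Summable fun n => ‖G n‖) :
    Summable fun n => ‖convC F G n‖ := by
  have h := summable_norm_convC_terms hF hG
  exact h.prod.of_nonneg_of_le (fun _ => norm_nonneg _) fun n =>
    norm_tsum_le_tsum_norm (h.prod_factor n)

theorem summable_convC_term (hF : Summable fun n => ‖F n‖) (hG : Summable fun n => ‖G n‖)
    (n : ℤ × ℤ) : Summable fun m => ‖F m * G (n - m)‖ :=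
  (summable_norm_convC_terms hF hG).prod_factor n

theorem convC_comm (F G : ℤ × ℤ → ℂ) : convC F G = convC G F := by
  funext n
  rw [convC, convC, ← (Equiv.subLeft n).tsum_eq]
  exact tsum_congr fun m => by simp [mul_comm]

end Convolution

section Torus

variable {F G : ℤ × ℤ → ℂ}

local instance : MeasureSpace UnitAddCircle := ⟨AddCircle.haarAddCircle⟩

local instance : Measure.IsAddHaarMeasure (volume : Measure UnitAddCircle) :=
  inferInstanceAs (Measure.IsAddHaarMeasure AddCircle.haarAddCircle)

local instance : IsProbabilityMeasure (volume : Measure UnitAddCircle) :=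
  inferInstanceAs (IsProbabilityMeasure AddCircle.haarAddCircle)

/-- The identification of frequencies in `ℤ × ℤ` with those in `Fin 2 → ℤ` used by
`UnitAddTorus`. -/
def freqEquiv : ℤ × ℤ ≃ (Fin 2 → ℤ) := (finTwoArrowEquiv ℤ).symm

/-- The continuous function on `𝕋²` with Fourier coefficients `F`. It is meaningful for absolutely
summable `F`, and otherwise a junk value. -/
def torusFn (F : ℤ × ℤ → ℂ) : C(UnitAddTorus (Fin 2), ℂ) :=
  ∑' n, F n • UnitAddTorus.mFourier (freqEquiv n)

theorem summable_norm_smul_mFourier (hF : Summable fun n => ‖F n‖) :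
    Summable fun n => ‖F n • UnitAddTorus.mFourier (freqEquiv n)‖ := by
  simpa only [norm_smul, UnitAddTorus.mFourier_norm, mul_one] using hF

theorem hasSum_torusFn (hF : Summable fun n => ‖F n‖) :
    HasSum (fun n => F n • UnitAddTorus.mFourier (freqEquiv n)) (torusFn F) :=
  (summable_norm_smul_mFourier hF).of_norm.hasSum

theorem torusFn_apply (hF : Summable fun n => ‖F n‖) (x : UnitAddTorus (Fin 2)) :
    torusFn F x = ∑' n, F n * UnitAddTorus.mFourier (freqEquiv n) x :=
  ((ContinuousMap.evalCLM ℂ x).hasSum (hasSum_torusFn hF)).tsum_eq.symm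

theorem norm_torusFn_le_tsum_norm (hF : Summable fun n => ‖F n‖) :
    ‖torusFn F‖ ≤ ∑' n, ‖F n‖ := by
  simpa only [torusFn, norm_smul, UnitAddTorus.mFourier_norm, mul_one] using
    norm_tsum_le_tsum_norm (summable_norm_smul_mFourier hF)

theorem mFourier_mul_mFourier (m n : ℤ × ℤ) :
    UnitAddTorus.mFourier (freqEquiv m) * UnitAddTorus.mFourier (freqEquiv n) =
      UnitAddTorus.mFourier (freqEquiv (m + n)) := by
  have h : freqEquiv (m + n) = freqEquiv m + freqEquiv n := by
    funext i; fin_cases i <;> rfl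
  ext x
  rw [h, UnitAddTorus.mFourier_add, ContinuousMap.mul_apply]

theorem torusFn_convC (hF : Summable fun n => ‖F n‖) (hG : Summable fun n => ‖G n‖) :
    torusFn (convC F G) = torusFn F * torusFn G := by
  have sF := summable_norm_smul_mFourier hF
  have sG := summable_norm_smul_mFourier hG
  have hterm (n m : ℤ × ℤ) : F m • UnitAddTorus.mFourier (freqEquiv m) *
      G (n - m) • UnitAddTorus.mFourier (freqEquiv (n - m)) =
        (F m * G (n - m)) • UnitAddTorus.mFourier (freqEquiv n) := by
    rw [smul_mul_smul_comm, mFourier_mul_mFourier, add_sub_cancel]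
  have hs := convEquiv.summable_iff.2 (summable_mul_of_summable_norm sF sG)
  symm
  calc torusFn F * torusFn G
      = ∑' n, ∑' m, F m • UnitAddTorus.mFourier (freqEquiv m) *
          G (n - m) • UnitAddTorus.mFourier (freqEquiv (n - m)) := by
        rw [torusFn, torusFn, tsum_mul_tsum_of_summable_norm sF sG, ← convEquiv.tsum_eq]
        exact hs.tsum_prod
    _ = torusFn (convC F G) := by
        simp only [hterm, torusFn]
        exact tsum_congr fun n => (summable_convC_term hF hG n).of_norm.tsum_smul_const _

theorem norm_toLp_torusFn_sq (hF : Summable fun n => ‖F n‖) :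
    ‖(torusFn F).toLp 2 volume ℂ‖ ^ 2 = ∑' n, ‖F n‖ ^ 2 := by
  have hmem : Memℓp (F ∘ freqEquiv.symm) 2 := by
    refine (memℓp_gen_iff (by simp)).2 (freqEquiv.summable_iff.1 ?_)
    simpa [Function.comp_def] using summable_sq_norm hF
  have hseries : (torusFn F).toLp 2 volume ℂ =
      UnitAddTorus.mFourierBasis.repr.symm ⟨F ∘ freqEquiv.symm, hmem⟩ := by
    refine (((ContinuousMap.toLp 2 volume ℂ).hasSum (hasSum_torusFn hF)).congr_fun
      fun n => ?_).unique (freqEquiv.hasSum_iff.2 (HilbertBasis.hasSum_repr_symm _ _))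
    simp [UnitAddTorus.coe_mFourierBasis, UnitAddTorus.mFourierLp]
  have hnorm := lp.norm_rpow_eq_tsum (by simp)
    (⟨F ∘ freqEquiv.symm, hmem⟩ : lp (fun _ : Fin 2 → ℤ => ℂ) 2)
  rw [hseries, LinearIsometryEquiv.norm_map, ← freqEquiv.symm.tsum_eq]
  simpa using hnorm

theorem tsum_sq_norm_convC_le (hF : Summable fun n => ‖F n‖) (hG : Summable fun n => ‖G n‖) :
    ∑' n, ‖convC F G n‖ ^ 2 ≤ ‖torusFn F‖ ^ 2 * ∑' n, ‖G n‖ ^ 2 := by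
  rw [← norm_toLp_torusFn_sq (summable_norm_convC hF hG), ← norm_toLp_torusFn_sq hG,
    torusFn_convC hF hG, ← mul_pow]
  gcongr
  refine Lp.norm_le_mul_norm_of_ae_le_mul ?_
  filter_upwards [ContinuousMap.coeFn_toLp (p := 2) (𝕜 := ℂ) volume (torusFn F * torusFn G),
    ContinuousMap.coeFn_toLp (p := 2) (𝕜 := ℂ) volume (torusFn G)] with x hFG hG
  rw [hFG, hG, ContinuousMap.mul_apply, norm_mul]
  gcongr
  exact (torusFn F).norm_coe_le_norm x

theorem tsum_sq_norm_convC_le_tsum_norm (hF : Summable fun n => ‖F n‖)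
    (hG : Summable fun n => ‖G n‖) :
    ∑' n, ‖convC F G n‖ ^ 2 ≤ (∑' n, ‖F n‖) ^ 2 * ∑' n, ‖G n‖ ^ 2 := by
  refine (tsum_sq_norm_convC_le hF hG).trans ?_
  gcongr
  exact norm_torusFn_le_tsum_norm hF

/-- The Fourier coefficients of the complex conjugate function. -/
def conjReflect (F : ℤ × ℤ → ℂ) : ℤ × ℤ → ℂ := fun n => (starRingEnd ℂ) (F (-n))

theorem torusFn_conjReflect (hF : Summable fun n => ‖F n‖) :
    torusFn (conjReflect F) = star (torusFn F) := by
  rw [torusFn, ← (Equiv.neg (ℤ × ℤ)).tsum_eq, ← (hasSum_torusFn hF).star.tsum_eq]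
  refine tsum_congr fun n => ContinuousMap.ext fun x => ?_
  have h : freqEquiv (-n) = -freqEquiv n := by funext i; fin_cases i <;> rfl
  simp [conjReflect, h, UnitAddTorus.mFourier_neg]

theorem norm_torusFn_conjReflect (hF : Summable fun n => ‖F n‖) :
    ‖torusFn (conjReflect F)‖ = ‖torusFn F‖ := by
  rw [torusFn_conjReflect hF]; exact norm_star (torusFn F)

end Torus

section Weights

variable {s : ℝ}

/-- The length `2π|n|` of the angular frequency vector of `exp(2πi n·x)`, the square root of the
corresponding eigenvalue of `-Δ`. -/
def angFreq (n : ℤ × ℤ) : ℝ := 2 * Real.pi * ‖(n.1 + n.2 * Complex.I : ℂ)‖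

theorem angFreq_nonneg (n : ℤ × ℤ) : 0 ≤ angFreq n := by unfold angFreq; positivity

theorem angFreq_zero : angFreq 0 = 0 := by simp [angFreq]

theorem angFreq_neg (n : ℤ × ℤ) : angFreq (-n) = angFreq n := by
  rw [angFreq, angFreq, ← norm_neg]
  congr 2
  push_cast [Prod.fst_neg, Prod.snd_neg]
  ring

theorem angFreq_sq (n : ℤ × ℤ) :
    angFreq n ^ 2 = 4 * Real.pi ^ 2 * ((n.1 : ℝ) ^ 2 + (n.2 : ℝ) ^ 2) := by
  have h := Complex.normSq_add_mul_I n.1 n.2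
  rw [Complex.normSq_eq_norm_sq] at h
  rw [angFreq, mul_pow, ← h]
  push_cast
  ring

theorem lam_eq_angFreq_sq (k : Freq) : lam k = angFreq k.1 ^ 2 := (angFreq_sq k.1).symm

theorem lam_rpow_eq_sq (k : Freq) (α : ℝ) : lam k ^ α = (angFreq k.1 ^ α) ^ 2 := by
  rw [lam_eq_angFreq_sq, Real.rpow_pow_comm (angFreq_nonneg _)]

theorem lam_rpow (k : Freq) (α : ℝ) : lam k ^ α = angFreq k.1 ^ (2 * α) := by
  rw [lam_eq_angFreq_sq, ← Real.rpow_natCast, ← Real.rpow_mul (angFreq_nonneg _), Nat.cast_ofNat]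

theorem norm_le_angFreq (n : ℤ × ℤ) : ‖n‖ ≤ angFreq n := by
  have hpi : 1 ≤ 2 * Real.pi := by linarith [Real.pi_gt_three]
  refine (max_le ?_ ?_).trans (le_mul_of_one_le_left (norm_nonneg _) hpi)
  · simpa [Int.norm_eq_abs] using Complex.abs_re_le_norm (n.1 + n.2 * Complex.I : ℂ)
  · simpa [Int.norm_eq_abs] using Complex.abs_im_le_norm (n.1 + n.2 * Complex.I : ℂ)

theorem one_le_angFreq (k : Freq) : 1 ≤ angFreq k.1 := by
  have hint {m : ℤ} (hm : ‖m‖ < 1) : m = 0 := by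
    rw [Int.norm_eq_abs] at hm
    exact Int.abs_lt_one_iff.1 (by exact_mod_cast hm)
  by_contra! h
  have hk : ‖k.1‖ < 1 := (norm_le_angFreq k.1).trans_lt h
  exact k.2 (Prod.ext (hint ((norm_fst_le k.1).trans_lt hk)) (hint ((norm_snd_le k.1).trans_lt hk)))

theorem one_le_lam (k : Freq) : 1 ≤ lam k := by
  rw [lam_eq_angFreq_sq]; exact one_le_pow₀ (one_le_angFreq k)

theorem lam_pos (k : Freq) : 0 < lam k := one_pos.trans_le (one_le_lam k)

theorem angFreq_le_add (n m : ℤ × ℤ) : angFreq n ≤ angFreq m + angFreq (n - m) := by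
  rw [angFreq, angFreq, angFreq, ← mul_add]
  refine mul_le_mul_of_nonneg_left ((norm_add_le _ _).trans_eq' (congrArg _ ?_)) (by positivity)
  push_cast [Prod.fst_sub, Prod.snd_sub]
  ring

theorem add_rpow_le_two_rpow_mul {x y : ℝ} (hx : 0 ≤ x) (hy : 0 ≤ y) (hs : 0 ≤ s) :
    (x + y) ^ s ≤ 2 ^ s * (x ^ s + y ^ s) := by
  wlog h : y ≤ x generalizing x y
  · simpa only [add_comm] using this hy hx (le_of_not_ge h)
  calc (x + y) ^ s ≤ (2 * x) ^ s := by gcongr; linarith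
    _ = 2 ^ s * x ^ s := Real.mul_rpow zero_le_two hx
    _ ≤ 2 ^ s * (x ^ s + y ^ s) := by gcongr; exact le_add_of_nonneg_right (by positivity)

theorem angFreq_rpow_le (hs : 0 ≤ s) (n m : ℤ × ℤ) :
    angFreq n ^ s ≤ 2 ^ s * (angFreq m ^ s + angFreq (n - m) ^ s) :=
  (Real.rpow_le_rpow (angFreq_nonneg n) (angFreq_le_add n m) hs).trans
    (add_rpow_le_two_rpow_mul (angFreq_nonneg m) (angFreq_nonneg _) hs)

theorem summable_lam_rpow_neg {α : ℝ} (hα : 1 < α) : Summable fun k : Freq => lam k ^ (-α) := by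
  have hsum : Summable fun n : ℤ × ℤ => ‖n‖ ^ (-(2 * α)) := by
    have h := EisensteinSeries.summable_one_div_norm_rpow (k := 2 * α) (by linarith)
    refine ((finTwoArrowEquiv ℤ).symm.summable_iff.2 h).congr fun n => ?_
    simp [EisensteinSeries.norm_eq_max_natAbs, Prod.norm_def, Int.norm_eq_abs]
  refine (hsum.comp_injective freq_val_injective).of_nonneg_of_le
    (fun k => Real.rpow_nonneg (lam_pos k).le _) fun k => ?_
  have hk : 0 < ‖k.1‖ := norm_pos_iff.2 k.2
  rw [lam_rpow, mul_neg]
  exact Real.rpow_le_rpow_of_nonpos hk (norm_le_angFreq k.1) (by linarith)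

theorem summable_lam_mul_and_tsum_le {α β γ : ℝ} (hγ : α + β = 2 * γ) {x y : Freq → ℝ}
    (hx : ∀ k, 0 ≤ x k) (hy : ∀ k, 0 ≤ y k) (sx : Summable fun k => lam k ^ α * x k ^ 2)
    (sy : Summable fun k => lam k ^ β * y k ^ 2) :
    (Summable fun k => lam k ^ γ * (x k * y k)) ∧
      ∑' k, lam k ^ γ * (x k * y k) ≤
        √(∑' k, lam k ^ α * x k ^ 2) * √(∑' k, lam k ^ β * y k ^ 2) := by
  have hsq (θ : ℝ) (z : Freq → ℝ) (k : Freq) :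
      (angFreq k.1 ^ θ * z k) ^ 2 = lam k ^ θ * z k ^ 2 := by rw [mul_pow, lam_rpow_eq_sq]
  have hmul (k : Freq) : angFreq k.1 ^ α * x k * (angFreq k.1 ^ β * y k) =
      lam k ^ γ * (x k * y k) := by
    have h : 0 < angFreq k.1 := one_pos.trans_le (one_le_angFreq k)
    rw [mul_mul_mul_comm, ← Real.rpow_add h, hγ, lam_rpow]
  simpa only [hmul, hsq] using summable_mul_and_tsum_mul_le_sqrt_mul_sqrt
    (f := fun k => angFreq k.1 ^ α * x k) (g := fun k => angFreq k.1 ^ β * y k)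
    (fun k => mul_nonneg (Real.rpow_nonneg (angFreq_nonneg _) _) (hx k))
    (fun k => mul_nonneg (Real.rpow_nonneg (angFreq_nonneg _) _) (hy k))
    (by simpa only [hsq] using sx) (by simpa only [hsq] using sy)

end Weights

section RapidDecay

variable {F G : ℤ × ℤ → ℂ} {s : ℝ}

/-- The Fourier coefficients of `(-Δ)^{s/2} f`, where `f` has Fourier coefficients `F`. -/
def fracD (s : ℝ) (F : ℤ × ℤ → ℂ) : ℤ × ℤ → ℂ := fun n => ((angFreq n ^ s : ℝ) : ℂ) * F n

/-- The absolute values of the Fourier coefficients; they are again complex numbers so that `convC`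
applies to them. -/
def absSeq (F : ℤ × ℤ → ℂ) : ℤ × ℤ → ℂ := fun n => ((‖F n‖ : ℝ) : ℂ)

/-- The Fourier coefficients of smooth functions on `𝕋²`: all fractional derivatives have
absolutely summable Fourier series. -/
def RapidDecay (F : ℤ × ℤ → ℂ) : Prop := ∀ s : ℝ, 0 ≤ s → Summable fun n => ‖fracD s F n‖

theorem norm_fracD (s : ℝ) (F : ℤ × ℤ → ℂ) (n : ℤ × ℤ) :
    ‖fracD s F n‖ = angFreq n ^ s * ‖F n‖ := by
  rw [fracD, norm_mul, Complex.norm_real,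
    Real.norm_of_nonneg (Real.rpow_nonneg (angFreq_nonneg n) s)]

theorem fracD_zero (F : ℤ × ℤ → ℂ) : fracD 0 F = F := by
  funext n; simp [fracD]

theorem fracD_apply_zero_of_ne (hs : s ≠ 0) (F : ℤ × ℤ → ℂ) : fracD s F 0 = 0 := by
  simp [fracD, angFreq_zero, Real.zero_rpow hs]

theorem fracD_apply_zero (hF : F 0 = 0) (s : ℝ) : fracD s F 0 = 0 := by simp [fracD, hF]

theorem norm_absSeq (F : ℤ × ℤ → ℂ) (n : ℤ × ℤ) : ‖absSeq F n‖ = ‖F n‖ := by simp [absSeq]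

theorem norm_convC_absSeq (F G : ℤ × ℤ → ℂ) (n : ℤ × ℤ) :
    ‖convC (absSeq F) (absSeq G) n‖ = ∑' m, ‖F m * G (n - m)‖ := by
  have h : convC (absSeq F) (absSeq G) n = ((∑' m, ‖F m * G (n - m)‖ : ℝ) : ℂ) := by
    simp only [convC, absSeq, Complex.ofReal_tsum, norm_mul, Complex.ofReal_mul]
  rw [h, Complex.norm_real, Real.norm_of_nonneg (tsum_nonneg fun _ => norm_nonneg _)]

theorem RapidDecay.summable (hF : RapidDecay F) : Summable fun n => ‖F n‖ := by
  simpa only [fracD_zero] using hF 0 le_rfl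

theorem norm_fracD_le_max (s : ℝ) (F : ℤ × ℤ → ℂ) (n : ℤ × ℤ) :
    ‖fracD s F n‖ ≤ ‖fracD (max s 0) F n‖ := by
  rcases le_total 0 s with hs | hs
  · rw [max_eq_left hs]
  rw [max_eq_right hs, fracD_zero, norm_fracD]
  refine mul_le_of_le_one_left (norm_nonneg _) ?_
  induction n using freq_induction with
  | zero => rw [angFreq_zero]; exact Real.zero_rpow_le_one s
  | freq k => exact Real.rpow_le_one_of_one_le_of_nonpos (one_le_angFreq k) hs

theorem RapidDecay.of_norm_le_fracD (hF : RapidDecay F) (h : ∀ n, ‖G n‖ ≤ ‖fracD s F n‖) :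
    RapidDecay G := by
  intro t ht
  refine (hF (t + max s 0) (by positivity)).of_nonneg_of_le (fun _ => norm_nonneg _) fun n => ?_
  have ha := angFreq_nonneg n
  calc ‖fracD t G n‖ = angFreq n ^ t * ‖G n‖ := norm_fracD t G n
    _ ≤ angFreq n ^ t * (angFreq n ^ max s 0 * ‖F n‖) := by
      gcongr; exact (h n).trans ((norm_fracD_le_max s F n).trans_eq (norm_fracD _ F n))
    _ = ‖fracD (t + max s 0) F n‖ := by
      rw [norm_fracD, Real.rpow_add_of_nonneg ha ht (le_max_right _ _), mul_assoc]

theorem RapidDecay.fracD (hF : RapidDecay F) (s : ℝ) : RapidDecay (fracD s F) :=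
  hF.of_norm_le_fracD fun _ => le_rfl

theorem RapidDecay.conjReflect (hF : RapidDecay F) : RapidDecay (conjReflect F) := fun s hs =>
  ((Equiv.neg (ℤ × ℤ)).summable_iff.2 (hF s hs)).congr fun n => by
    simp [norm_fracD, NS2D.conjReflect, angFreq_neg]

theorem RapidDecay.summable_sq (hF : RapidDecay F) : Summable fun n => ‖F n‖ ^ 2 :=
  summable_sq_norm hF.summable

theorem RapidDecay.convC_term (hF : RapidDecay F) (hG : RapidDecay G) (n : ℤ × ℤ) :
    Summable fun m => ‖F m * G (n - m)‖ := summable_convC_term hF.summable hG.summable n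

theorem summable_norm_absSeq (hF : Summable fun n => ‖F n‖) :
    Summable fun n => ‖absSeq F n‖ := by simpa only [norm_absSeq] using hF

/-- A substitute for the Leibniz rule, valid for fractional derivatives. -/
theorem norm_fracD_convC_le (hs : 0 ≤ s) (hF : RapidDecay F) (hG : RapidDecay G) (n : ℤ × ℤ) :
    ‖fracD s (convC F G) n‖ ≤ 2 ^ s * (‖convC (absSeq (fracD s F)) (absSeq G) n‖ +
      ‖convC (absSeq F) (absSeq (fracD s G)) n‖) := by
  have hFG := hF.convC_term hG n
  have hDF := (hF.fracD s).convC_term hG n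
  have hDG := hF.convC_term (hG.fracD s) n
  have hterm (m : ℤ × ℤ) : angFreq n ^ s * ‖F m * G (n - m)‖ ≤
      2 ^ s * (‖fracD s F m * G (n - m)‖ + ‖F m * fracD s G (n - m)‖) := by
    calc angFreq n ^ s * ‖F m * G (n - m)‖
        ≤ 2 ^ s * (angFreq m ^ s + angFreq (n - m) ^ s) * ‖F m * G (n - m)‖ := by
          gcongr; exact angFreq_rpow_le hs n m
      _ = _ := by simp only [norm_mul, norm_fracD]; ring
  rw [norm_fracD, norm_convC_absSeq, norm_convC_absSeq, ← hDF.tsum_add hDG, ← tsum_mul_left]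
  calc angFreq n ^ s * ‖convC F G n‖ ≤ angFreq n ^ s * ∑' m, ‖F m * G (n - m)‖ := by
        gcongr
        · exact Real.rpow_nonneg (angFreq_nonneg n) s
        · exact norm_tsum_le_tsum_norm hFG
    _ ≤ _ := by
      rw [← tsum_mul_left]
      exact Summable.tsum_le_tsum hterm (hFG.mul_left _) ((hDF.add hDG).mul_left _)

theorem RapidDecay.convC (hF : RapidDecay F) (hG : RapidDecay G) : RapidDecay (convC F G) := by
  intro s hs
  have hDF := summable_norm_convC (summable_norm_absSeq (hF s hs))
    (summable_norm_absSeq hG.summable)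
  have hDG := summable_norm_convC (summable_norm_absSeq hF.summable)
    (summable_norm_absSeq (hG s hs))
  exact ((hDF.add hDG).mul_left (2 ^ s)).of_nonneg_of_le (fun _ => norm_nonneg _)
    (norm_fracD_convC_le hs hF hG)

end RapidDecay

section ScalarSobolev

variable {F G : ℤ × ℤ → ℂ} {α β : ℝ}

theorem lam_rpow_mul_sq_norm (α : ℝ) (F : ℤ × ℤ → ℂ) (k : Freq) :
    lam k ^ α * ‖F k.1‖ ^ 2 = ‖fracD α F k.1‖ ^ 2 := by
  rw [norm_fracD, mul_pow, lam_rpow_eq_sq]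

theorem RapidDecay.summable_sobolev (hF : RapidDecay F) (α : ℝ) :
    Summable fun k : Freq => lam k ^ α * ‖F k.1‖ ^ 2 := by
  simpa only [lam_rpow_mul_sq_norm, Function.comp_def] using
    (hF.fracD α).summable_sq.comp_injective freq_val_injective

theorem hSqScalar_nonneg (α : ℝ) (F : ℤ × ℤ → ℂ) : 0 ≤ hSqScalar α F :=
  tsum_nonneg fun k => mul_nonneg (Real.rpow_nonneg (lam_pos k).le α) (sq_nonneg _)

theorem hSqScalar_eq_tsum (h0 : fracD α F 0 = 0) : hSqScalar α F = ∑' n, ‖fracD α F n‖ ^ 2 := by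
  simp only [hSqScalar, lam_rpow_mul_sq_norm]
  exact tsum_freq (g := fun n => ‖fracD α F n‖ ^ 2) (by simp [h0])

theorem RapidDecay.hSqScalar_mono (hF : RapidDecay F) (h : α ≤ β) :
    hSqScalar α F ≤ hSqScalar β F :=
  Summable.tsum_le_tsum (fun k => by gcongr; exact one_le_lam k)
    (hF.summable_sobolev α) (hF.summable_sobolev β)

theorem hSqScalar_conjReflect (α : ℝ) (F : ℤ × ℤ → ℂ) :
    hSqScalar α (conjReflect F) = hSqScalar α F := by
  let e : Freq ≃ Freq := (Equiv.neg (ℤ × ℤ)).subtypeEquiv fun n => by simp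
  rw [hSqScalar, ← e.tsum_eq]
  refine tsum_congr fun k => ?_
  have he : (e k).1 = -k.1 := rfl
  rw [lam_eq_angFreq_sq, lam_eq_angFreq_sq, he, angFreq_neg, conjReflect, neg_neg,
    Complex.norm_conj]

theorem sq_tsum_norm_le_hSqScalar (hα : 1 < α) (hG0 : G 0 = 0)
    (hG : Summable fun k : Freq => lam k ^ α * ‖G k.1‖ ^ 2) :
    (∑' n, ‖G n‖) ^ 2 ≤ (∑' k : Freq, lam k ^ (-α)) * hSqScalar α G := by
  have h := (summable_lam_mul_and_tsum_le (α := -α) (β := α) (γ := 0) (by ring)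
    (x := fun _ => 1) (y := fun k => ‖G k.1‖) (fun _ => zero_le_one) (fun _ => norm_nonneg _)
    (by simpa using summable_lam_rpow_neg hα) hG).2
  simp only [Real.rpow_zero, one_mul, one_pow, mul_one] at h
  rw [← tsum_freq (g := fun n => ‖G n‖) (by simp [hG0])]
  calc (∑' k : Freq, ‖G k.1‖) ^ 2 ≤ (√(∑' k : Freq, lam k ^ (-α)) * √(hSqScalar α G)) ^ 2 :=
        pow_le_pow_left₀ (tsum_nonneg fun _ => norm_nonneg _) h 2
    _ = _ := by
      rw [mul_pow, Real.sq_sqrt (tsum_nonneg fun k => Real.rpow_nonneg (lam_pos k).le _),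
        Real.sq_sqrt (hSqScalar_nonneg α G)]

end ScalarSobolev

section Multipliers

variable {F G H : ℤ × ℤ → ℂ} {α s : ℝ}

/-- The `j`-th coordinate of a frequency. -/
def coord (j : Fin 2) (n : ℤ × ℤ) : ℤ := if j = 0 then n.1 else n.2

/-- The Fourier coefficients of `∂_j f`, where `f` has Fourier coefficients `F`. -/
def partialD (j : Fin 2) (F : ℤ × ℤ → ℂ) : ℤ × ℤ → ℂ := fun n =>
  2 * Real.pi * Complex.I * coord j n * F n

theorem norm_partialD (j : Fin 2) (F : ℤ × ℤ → ℂ) (n : ℤ × ℤ) :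
    ‖partialD j F n‖ = 2 * Real.pi * |(coord j n : ℝ)| * ‖F n‖ := by
  simp [partialD, abs_of_pos Real.pi_pos]

theorem sum_sq_norm_partialD (F : ℤ × ℤ → ℂ) (n : ℤ × ℤ) :
    ∑ j, ‖partialD j F n‖ ^ 2 = ‖fracD 1 F n‖ ^ 2 := by
  simp only [norm_partialD, norm_fracD, Real.rpow_one, mul_pow, sq_abs, angFreq_sq,
    Fin.sum_univ_two, coord, if_true, one_ne_zero, if_false]
  ring

theorem norm_partialD_le (j : Fin 2) (F : ℤ × ℤ → ℂ) (n : ℤ × ℤ) :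
    ‖partialD j F n‖ ≤ ‖fracD 1 F n‖ := by
  refine le_of_sq_le_sq ?_ (norm_nonneg _)
  rw [← sum_sq_norm_partialD]
  exact Finset.single_le_sum (f := fun j => ‖partialD j F n‖ ^ 2) (fun _ _ => sq_nonneg _)
    (Finset.mem_univ j)

theorem RapidDecay.partialD (hF : RapidDecay F) (j : Fin 2) : RapidDecay (partialD j F) :=
  hF.of_norm_le_fracD (norm_partialD_le j F)

theorem partialD_convC (hF : RapidDecay F) (hG : RapidDecay G) (j : Fin 2) (n : ℤ × ℤ) :
    partialD j (convC F G) n = convC (partialD j F) G n + convC F (partialD j G) n := by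
  have hDF := ((hF.partialD j).convC_term hG n).of_norm
  have hDG := (hF.convC_term (hG.partialD j) n).of_norm
  rw [convC, convC, ← hDF.tsum_add hDG, partialD, convC, ← tsum_mul_left]
  refine tsum_congr fun m => ?_
  have h : coord j n = coord j m + coord j (n - m) := by unfold coord; split_ifs <;> simp
  simp only [partialD, h]
  push_cast
  ring

theorem hSqScalar_one_eq (hF : RapidDecay F) :
    hSqScalar 1 F = ∑ j, ∑' n, ‖partialD j F n‖ ^ 2 := by
  rw [hSqScalar_eq_tsum (fracD_apply_zero_of_ne one_ne_zero F),
    ← Summable.tsum_finsetSum fun j _ => (hF.partialD j).summable_sq]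
  exact tsum_congr fun n => (sum_sq_norm_partialD F n).symm

/-- The norm of `C^l(𝕋²)` for `l ≤ 1` and of `Ḣ^l` for `l ≥ 2`: the scalar counterpart of `bN`. -/
def multNorm (l : ℕ) (F : ℤ × ℤ → ℂ) : ℝ :=
  if l = 0 then ‖torusFn F‖
  else if l = 1 then ‖torusFn F‖ + ‖torusFn (partialD 0 F)‖ + ‖torusFn (partialD 1 F)‖
  else √(hSqScalar l F)

theorem multNorm_nonneg (l : ℕ) (F : ℤ × ℤ → ℂ) : 0 ≤ multNorm l F := by
  unfold multNorm; split_ifs <;> positivity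

theorem multNorm_conjReflect (l : ℕ) (hF : RapidDecay F) :
    multNorm l (conjReflect F) = multNorm l F := by
  have hD (j : Fin 2) : partialD j (conjReflect F) = conjReflect (partialD j F) := by
    funext n
    have h : coord j (-n) = -coord j n := by unfold coord; split_ifs <;> rfl
    simp [partialD, conjReflect, h, Complex.conj_ofNat]
  simp only [multNorm, hD, norm_torusFn_conjReflect hF.summable,
    norm_torusFn_conjReflect (hF.partialD _).summable, hSqScalar_conjReflect]

theorem hSqScalar_zero_convC_le (hF : Summable fun n => ‖F n‖) (hG : Summable fun n => ‖G n‖)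
    (hG0 : G 0 = 0) :
    hSqScalar 0 (convC F G) ≤ ‖torusFn F‖ ^ 2 * hSqScalar 0 G := by
  rw [hSqScalar_eq_tsum (fracD_apply_zero hG0 0), fracD_zero]
  refine le_trans ?_ (tsum_sq_norm_convC_le hF hG)
  simpa only [hSqScalar, Real.rpow_zero, one_mul, Function.comp_def] using
    tsum_comp_le_tsum_of_inj (summable_sq_norm (summable_norm_convC hF hG))
      (fun _ => sq_nonneg _) freq_val_injective

theorem tsum_sq_norm_partialD_convC_le (hF : RapidDecay F) (hG : RapidDecay G) (j : Fin 2) :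
    ∑' n, ‖partialD j (convC F G) n‖ ^ 2 ≤
      2 * (‖torusFn (partialD j F)‖ ^ 2 * ∑' n, ‖G n‖ ^ 2 +
        ‖torusFn F‖ ^ 2 * ∑' n, ‖partialD j G n‖ ^ 2) := by
  have hleibniz := tsum_sq_norm_le_of_norm_le_add (c := 1) (h := partialD j (convC F G))
    ((hF.partialD j).convC hG).summable_sq (hF.convC (hG.partialD j)).summable_sq
    fun n => by rw [partialD_convC hF hG, one_mul]; exact norm_add_le _ _
  rw [one_pow, mul_one] at hleibniz
  refine hleibniz.trans ?_
  gcongr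
  · exact tsum_sq_norm_convC_le (hF.partialD j).summable hG.summable
  · exact tsum_sq_norm_convC_le hF.summable (hG.partialD j).summable

theorem hSqScalar_one_convC_le (hF : RapidDecay F) (hG : RapidDecay G) (hG0 : G 0 = 0) :
    hSqScalar 1 (convC F G) ≤ 2 * multNorm 1 F ^ 2 * hSqScalar 1 G := by
  have hpoincare : ∑' n, ‖G n‖ ^ 2 ≤ hSqScalar 1 G := by
    simpa only [hSqScalar_eq_tsum (fracD_apply_zero hG0 0), fracD_zero] using
      hG.hSqScalar_mono zero_le_one
  have hb : 0 ≤ ‖torusFn F‖ := norm_nonneg _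
  have hb' (j : Fin 2) : 0 ≤ ‖torusFn (partialD j F)‖ := norm_nonneg _
  calc hSqScalar 1 (convC F G)
      ≤ ∑ j, 2 * (‖torusFn (partialD j F)‖ ^ 2 * hSqScalar 1 G +
          ‖torusFn F‖ ^ 2 * ∑' n, ‖partialD j G n‖ ^ 2) := by
        rw [hSqScalar_one_eq (hF.convC hG)]
        gcongr with j
        exact (tsum_sq_norm_partialD_convC_le hF hG j).trans (by gcongr)
    _ = 2 * (‖torusFn F‖ ^ 2 + ∑ j, ‖torusFn (partialD j F)‖ ^ 2) * hSqScalar 1 G := by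
        rw [← Finset.mul_sum, Finset.sum_add_distrib, ← Finset.sum_mul, ← Finset.mul_sum,
          ← hSqScalar_one_eq hG]
        ring
    _ ≤ 2 * multNorm 1 F ^ 2 * hSqScalar 1 G := by
        have hG1 := hSqScalar_nonneg 1 G
        simp only [multNorm, one_ne_zero, if_false, if_true, Fin.sum_univ_two]
        gcongr
        nlinarith [mul_nonneg hb (hb' 0), mul_nonneg hb (hb' 1), mul_nonneg (hb' 0) (hb' 1)]

/-- Once all derivatives fall on one factor, Young's inequality measures that factor in `ℓ²` and the
other one in `ℓ¹`, that is, in the Wiener algebra. -/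
theorem hSqScalar_convC_le_of_one_lt (hs : 1 < s) (hF : RapidDecay F) (hF0 : F 0 = 0)
    (hG : RapidDecay G) (hG0 : G 0 = 0) :
    hSqScalar s (convC F G) ≤
      4 * (2 ^ s) ^ 2 * (∑' k : Freq, lam k ^ (-s)) * hSqScalar s F * hSqScalar s G := by
  have hs0 : 0 < s := one_pos.trans hs
  set K := ∑' k : Freq, lam k ^ (-s)
  have hyoung {F G : ℤ × ℤ → ℂ} (hF : RapidDecay F) (hG : RapidDecay G) (hF0 : F 0 = 0) :
      ∑' n, ‖convC (absSeq F) (absSeq (fracD s G)) n‖ ^ 2 ≤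
        K * hSqScalar s F * hSqScalar s G := by
    have h := tsum_sq_norm_convC_le_tsum_norm (summable_norm_absSeq hF.summable)
      (summable_norm_absSeq (hG.fracD s).summable)
    simp only [norm_absSeq] at h
    rw [← hSqScalar_eq_tsum (fracD_apply_zero_of_ne hs0.ne' G)] at h
    refine h.trans ?_
    gcongr
    exacts [hSqScalar_nonneg s G, sq_tsum_norm_le_hSqScalar hs hF0 (hF.summable_sobolev s)]
  have hsq {F G : ℤ × ℤ → ℂ} (hF : RapidDecay F) (hG : RapidDecay G) :
      Summable fun n => ‖convC (absSeq F) (absSeq G) n‖ ^ 2 :=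
    summable_sq_norm (summable_norm_convC (summable_norm_absSeq hF.summable)
      (summable_norm_absSeq hG.summable))
  have hleibniz := tsum_sq_norm_le_of_norm_le_add (hsq (hF.fracD s) hG) (hsq hF (hG.fracD s))
    (norm_fracD_convC_le hs0.le hF hG)
  rw [← hSqScalar_eq_tsum (fracD_apply_zero_of_ne hs0.ne' _), convC_comm (absSeq (fracD s F))]
    at hleibniz
  calc hSqScalar s (convC F G)
      ≤ 2 * (2 ^ s) ^ 2 * (K * hSqScalar s G * hSqScalar s F +
          K * hSqScalar s F * hSqScalar s G) := by
        refine hleibniz.trans ?_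
        gcongr
        exacts [hyoung hG hF hG0, hyoung hF hG hF0]
    _ = _ := by ring

theorem exists_hSqScalar_natCast_convC_le (l : ℕ) : ∃ C > 0, ∀ F G, RapidDecay F → RapidDecay G →
    F 0 = 0 → G 0 = 0 →
      hSqScalar l (convC F G) ≤ C * multNorm l F ^ 2 * hSqScalar l G := by
  obtain rfl | rfl | hl : l = 0 ∨ l = 1 ∨ 1 < l := by lia
  · exact ⟨1, one_pos, fun F G hF hG _ hG0 => by
      simpa [multNorm] using hSqScalar_zero_convC_le hF.summable hG.summable hG0⟩
  · exact ⟨2, two_pos, fun F G hF hG _ hG0 => by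
      simpa using hSqScalar_one_convC_le hF hG hG0⟩
  · have hK : 0 ≤ ∑' k : Freq, lam k ^ (-(l : ℝ)) :=
      tsum_nonneg fun k => Real.rpow_nonneg (lam_pos k).le _
    refine ⟨4 * (2 ^ (l : ℝ)) ^ 2 * (∑' k : Freq, lam k ^ (-(l : ℝ))) + 1, by positivity,
      fun F G hF hG hF0 hG0 => ?_⟩
    have hG' := hSqScalar_nonneg l G
    have hF' := hSqScalar_nonneg l F
    rw [multNorm, if_neg (by lia), if_neg (by lia), Real.sq_sqrt hF']
    refine (hSqScalar_convC_le_of_one_lt (by exact_mod_cast hl) hF hF0 hG hG0).trans ?_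
    gcongr
    exact le_add_of_nonneg_right zero_le_one

theorem tsum_convC_mul_conj (hF : Summable fun n => ‖F n‖) (hG : Summable fun n => ‖G n‖)
    (hH : Summable fun n => ‖H n‖) :
    ∑' n, convC F G n * (starRingEnd ℂ) (H n) =
      ∑' n, G n * (starRingEnd ℂ) (convC (conjReflect F) H n) := by
  have hsum : Summable fun p : (ℤ × ℤ) × (ℤ × ℤ) =>
      G p.2 * F (p.1 - p.2) * (starRingEnd ℂ) (H p.1) := by
    refine Summable.of_norm (((summable_norm_convC_terms hG hF).mul_right
      (∑' n, ‖H n‖)).of_nonneg_of_le (fun _ => norm_nonneg _) fun p => ?_)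
    rw [norm_mul, RCLike.norm_conj]
    gcongr
    exact hH.le_tsum _ fun _ _ => norm_nonneg _
  calc ∑' n, convC F G n * (starRingEnd ℂ) (H n)
      = ∑' n, ∑' m, G m * F (n - m) * (starRingEnd ℂ) (H n) := by
        rw [convC_comm F G]
        simp only [convC, tsum_mul_right]
    _ = ∑' m, ∑' n, G m * F (n - m) * (starRingEnd ℂ) (H n) :=
        (Summable.tsum_comm (f := fun n m => G m * F (n - m) * (starRingEnd ℂ) (H n)) hsum).symm
    _ = _ := by
        refine tsum_congr fun m => ?_
        rw [convC_comm, convC, Complex.conj_tsum, ← tsum_mul_left]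
        refine tsum_congr fun n => ?_
        rw [map_mul, conjReflect, Complex.conj_conj, neg_sub]
        ring

theorem norm_tsum_mul_conj_le (hG : Summable fun k : Freq => lam k ^ (-α) * ‖G k.1‖ ^ 2)
    (hH : Summable fun k : Freq => lam k ^ α * ‖H k.1‖ ^ 2) (hG0 : G 0 = 0) :
    ‖∑' n, G n * (starRingEnd ℂ) (H n)‖ ≤ √(hSqScalar (-α) G) * √(hSqScalar α H) := by
  obtain ⟨hs, hle⟩ := summable_lam_mul_and_tsum_le (α := -α) (β := α) (γ := 0) (by ring)
    (x := fun k => ‖G k.1‖) (y := fun k => ‖H k.1‖) (fun _ => norm_nonneg _)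
    (fun _ => norm_nonneg _) hG hH
  simp only [Real.rpow_zero, one_mul] at hs hle
  rw [← tsum_freq (g := fun n => G n * (starRingEnd ℂ) (H n)) (by simp [hG0])]
  refine (norm_tsum_le_tsum_norm ?_).trans (le_trans (le_of_eq ?_) hle)
  · simpa using hs
  · simp

/-- Multiplication by `f` on `Ḣ^{-α}` is dual to multiplication by the conjugate of `f` on `Ḣ^α`;
the proof pairs `f g` with the test function `(-Δ)^{-α} (f g)`. -/
theorem hSqScalar_neg_convC_le_of_dual (hα : α ≠ 0) {M : ℝ} (hM : 0 ≤ M) (hF : RapidDecay F)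
    (hG : RapidDecay G) (hG0 : G 0 = 0)
    (hdual : ∀ H, RapidDecay H → H 0 = 0 →
      hSqScalar α (convC (conjReflect F) H) ≤ M * hSqScalar α H) :
    hSqScalar (-α) (convC F G) ≤ M * hSqScalar (-α) G := by
  have hFG := hF.convC hG
  set H := fracD (-(2 * α)) (convC F G) with hH_def
  have hH : RapidDecay H := hFG.fracD _
  have hH0 : H 0 = 0 := fracD_apply_zero_of_ne (by simpa using hα) _
  set X := hSqScalar (-α) (convC F G) with hX_def
  have hX : 0 ≤ X := hSqScalar_nonneg _ _
  have hcoeff (k : Freq) : H k.1 = ((lam k ^ (-α) : ℝ) : ℂ) * convC F G k.1 := by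
    rw [hH_def, fracD, lam_rpow, mul_neg]
  have hHX : hSqScalar α H = X := tsum_congr fun k => by
    have hlam := lam_pos k
    rw [hcoeff, norm_mul, mul_pow, Complex.norm_real, Real.norm_of_nonneg (by positivity), sq,
      ← mul_assoc, ← mul_assoc, ← Real.rpow_add hlam, add_neg_cancel, Real.rpow_zero, one_mul]
  have hpair : ∑' n, convC F G n * (starRingEnd ℂ) (H n) = (X : ℂ) := by
    rw [← tsum_freq (by simp [hH0]), hX_def, hSqScalar, Complex.ofReal_tsum]
    refine tsum_congr fun k => ?_
    rw [hcoeff, map_mul, Complex.conj_ofReal, mul_left_comm, Complex.mul_conj']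
    push_cast
    rfl
  have hbound : X ≤ √(hSqScalar (-α) G) * √(M * X) := by
    calc X = ‖∑' n, G n * (starRingEnd ℂ) (convC (conjReflect F) H n)‖ := by
          rw [← tsum_convC_mul_conj hF.summable hG.summable hH.summable, hpair,
            Complex.norm_of_nonneg hX]
      _ ≤ √(hSqScalar (-α) G) * √(hSqScalar α (convC (conjReflect F) H)) :=
          norm_tsum_mul_conj_le (hG.summable_sobolev _)
            ((hF.conjReflect.convC hH).summable_sobolev _) hG0
      _ ≤ _ := by rw [← hHX]; gcongr; exact hdual H hH hH0
  rcases hX.eq_or_lt with hX0 | hX0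
  · rw [← hX0]; exact mul_nonneg hM (hSqScalar_nonneg _ _)
  refine le_of_mul_le_mul_right ?_ hX0
  rw [← Real.sqrt_mul (hSqScalar_nonneg _ _), Real.le_sqrt' hX0] at hbound
  linear_combination hbound

theorem exists_hSqScalar_intCast_convC_le (a : ℤ) : ∃ C > 0, ∀ F G, RapidDecay F → RapidDecay G →
    F 0 = 0 → G 0 = 0 →
      hSqScalar a (convC F G) ≤ C * multNorm a.natAbs F ^ 2 * hSqScalar a G := by
  obtain ⟨C, hC, h⟩ := exists_hSqScalar_natCast_convC_le a.natAbs
  refine ⟨C, hC, fun F G hF hG hF0 hG0 => ?_⟩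
  rw [Nat.cast_natAbs] at h
  rcases le_or_gt 0 a with ha | ha
  · rw [abs_of_nonneg ha] at h
    exact h F G hF hG hF0 hG0
  · have hcast : (a : ℝ) = -((|a| : ℤ) : ℝ) := by rw [abs_of_neg ha]; simp
    rw [hcast]
    refine hSqScalar_neg_convC_le_of_dual (by simpa using ha.ne) (by positivity) hF hG hG0
      fun H hH hH0 => ?_
    rw [← multNorm_conjReflect _ hF]
    exact h _ H hF.conjReflect hH (by simp [conjReflect, hF0]) hH0

end Multipliers

section VectorFields

variable {c : Coef}

/-- All homogeneous Sobolev norms are finite: `c` represents a smooth divergence-free mean-zero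
vector field, which may be complex-valued. -/
def FinHinf (c : Coef) : Prop := ∀ α : ℝ, FinH α c

theorem MemHinf.finHinf (h : MemHinf c) : FinHinf c := fun α => (h α).2

theorem hSq_nonneg (α : ℝ) (c : Coef) : 0 ≤ hSq α c :=
  tsum_nonneg fun k => mul_nonneg (Real.rpow_nonneg (lam_pos k).le α) (sq_nonneg _)

theorem hN_nonneg (α : ℝ) (c : Coef) : 0 ≤ hN α c := Real.sqrt_nonneg _

theorem hN_sq (α : ℝ) (c : Coef) : hN α c ^ 2 = hSq α c := Real.sq_sqrt (hSq_nonneg α c)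

theorem knormSq_pos (k : Freq) : 0 < knormSq k :=
  pos_of_mul_pos_right (lam_pos k) (by positivity)

theorem sum_sq_evecC (k : Freq) : ∑ i, evecC i k ^ 2 = 1 := by
  have hk := knormSq_pos k
  simp only [Fin.sum_univ_two, evecC, evec, if_true, one_ne_zero, if_false, div_pow, neg_sq,
    Real.sq_sqrt hk.le]
  rw [← add_div, div_eq_one_iff_eq hk.ne', knormSq, add_comm]

theorem abs_evecC_le_one (i : Fin 2) (k : Freq) : |evecC i k| ≤ 1 := by
  rw [← sq_le_one_iff_abs_le_one, ← sum_sq_evecC k]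
  exact Finset.single_le_sum (f := fun i => evecC i k ^ 2) (fun _ _ => sq_nonneg _)
    (Finset.mem_univ i)

theorem compCoef_zero (i : Fin 2) (c : Coef) : compCoef i c 0 = 0 := by simp [compCoef]

theorem compCoef_freq (i : Fin 2) (c : Coef) (k : Freq) :
    compCoef i c k.1 = c k * (evecC i k : ℂ) := dif_pos k.2

theorem norm_compCoef_le (i : Fin 2) (c : Coef) (k : Freq) : ‖compCoef i c k.1‖ ≤ ‖c k‖ := by
  rw [compCoef_freq, norm_mul, Complex.norm_real]
  exact mul_le_of_le_one_right (norm_nonneg _) (abs_evecC_le_one i k)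

theorem FinHinf.rapidDecay_compCoef (hc : FinHinf c) (i : Fin 2) : RapidDecay (compCoef i c) := by
  intro s _
  have hsum := (summable_lam_mul_and_tsum_le (α := -2) (β := s + 2) (γ := s / 2) (by ring)
    (x := fun _ => 1) (y := fun k => ‖c k‖) (fun _ => zero_le_one) (fun _ => norm_nonneg _)
    (by simpa using summable_lam_rpow_neg one_lt_two) (hc (s + 2))).1
  have hzero : ∀ n ∉ range (fun k : Freq => k.1), ‖fracD s (compCoef i c) n‖ = 0 := by
    intro n
    induction n using freq_induction with
    | zero => simp [fracD_apply_zero (compCoef_zero i c)]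
    | freq k => exact fun h => absurd ⟨k, rfl⟩ h
  refine (freq_val_injective.summable_iff hzero).1
    (hsum.of_nonneg_of_le (fun _ => norm_nonneg _) fun k => ?_)
  rw [Function.comp_apply, norm_fracD, lam_rpow, mul_div_cancel₀ s two_ne_zero, one_mul]
  gcongr
  · exact Real.rpow_nonneg (angFreq_nonneg _) _
  · exact norm_compCoef_le i c k

theorem FinH.hSqScalar_compCoef_le {α : ℝ} (hc : FinH α c) (i : Fin 2) :
    hSqScalar α (compCoef i c) ≤ hSq α c := by
  have hle (k : Freq) : lam k ^ α * ‖compCoef i c k.1‖ ^ 2 ≤ lam k ^ α * ‖c k‖ ^ 2 := by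
    have := lam_pos k
    gcongr
    exact norm_compCoef_le i c k
  have hsum := Summable.of_nonneg_of_le
    (fun k => mul_nonneg (Real.rpow_nonneg (lam_pos k).le α) (sq_nonneg _)) hle hc
  exact hsum.tsum_le_tsum hle hc

theorem compCoef_pderiv (i j : Fin 2) (c : Coef) :
    compCoef i (pderiv j c) = partialD j (compCoef i c) := by
  funext n
  induction n using freq_induction with
  | zero => simp [compCoef_zero, partialD]
  | freq k =>
    rw [partialD, compCoef_freq, compCoef_freq, pderiv, coord]
    split_ifs <;> push_cast <;> ring

theorem evalComp_eq_torusFn {i : Fin 2} (h : Summable fun n => ‖compCoef i c n‖) (y : ℝ × ℝ) :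
    evalComp i c y = torusFn (compCoef i c) ![y.1, y.2] := by
  rw [torusFn_apply h, ← tsum_freq (by simp [compCoef_zero]), evalComp]
  refine tsum_congr fun k => ?_
  rw [compCoef_freq, efun]
  simp only [UnitAddTorus.mFourier, freqEquiv, ContinuousMap.coe_mk, Fin.prod_univ_two,
    Matrix.cons_val_zero, Matrix.cons_val_one, fourier_coe_apply, ← Complex.exp_add]
  congr 2
  simp [finTwoArrowEquiv]
  ring

theorem norm_torusFn_compCoef_le_c0N (h : ∀ i, Summable fun n => ‖compCoef i c n‖) (i : Fin 2) :
    ‖torusFn (compCoef i c)‖ ≤ c0N c := by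
  have hbdd : BddAbove (range fun y : ℝ × ℝ => max ‖evalComp 0 c y‖ ‖evalComp 1 c y‖) := by
    refine ⟨max ‖torusFn (compCoef 0 c)‖ ‖torusFn (compCoef 1 c)‖, ?_⟩
    rintro _ ⟨y, rfl⟩
    simp only [evalComp_eq_torusFn (h _)]
    gcongr <;> exact ContinuousMap.norm_coe_le_norm _ _
  have hle (y : ℝ × ℝ) : ‖evalComp i c y‖ ≤ c0N c := by
    refine le_trans ?_ (le_ciSup hbdd y)
    fin_cases i
    exacts [le_max_left _ _, le_max_right _ _]
  refine (ContinuousMap.norm_le _ ((norm_nonneg _).trans (hle 0))).2 fun x => ?_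
  obtain ⟨y₀, hy₀⟩ := QuotientAddGroup.mk_surjective (x 0)
  obtain ⟨y₁, hy₁⟩ := QuotientAddGroup.mk_surjective (x 1)
  have hx : x = ![((y₀ : ℝ) : UnitAddCircle), ((y₁ : ℝ) : UnitAddCircle)] := by
    funext j
    fin_cases j
    exacts [hy₀.symm, hy₁.symm]
  rw [hx, ← evalComp_eq_torusFn (h i) (y₀, y₁)]
  exact hle _

theorem c0N_nonneg (c : Coef) : 0 ≤ c0N c :=
  Real.iSup_nonneg fun _ => le_max_of_le_left (norm_nonneg _)

theorem bN_nonneg (l : ℕ) (c : Coef) : 0 ≤ bN l c := by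
  unfold bN c1N
  split_ifs
  · exact c0N_nonneg c
  · linarith [c0N_nonneg c, c0N_nonneg (pderiv 0 c), c0N_nonneg (pderiv 1 c)]
  · exact hN_nonneg _ c

theorem FinHinf.multNorm_compCoef_le (hc : FinHinf c) (l : ℕ) (i : Fin 2) :
    multNorm l (compCoef i c) ≤ bN l c := by
  have hsum i := (hc.rapidDecay_compCoef i).summable
  have hderiv (j : Fin 2) : ‖torusFn (partialD j (compCoef i c))‖ ≤ c0N (pderiv j c) := by
    rw [← compCoef_pderiv]
    refine norm_torusFn_compCoef_le_c0N (fun i => ?_) i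
    rw [compCoef_pderiv]
    exact ((hc.rapidDecay_compCoef i).partialD j).summable
  unfold multNorm bN c1N
  split_ifs
  · exact norm_torusFn_compCoef_le_c0N hsum i
  · exact add_le_add_three (norm_torusFn_compCoef_le_c0N hsum i) (hderiv 0) (hderiv 1)
  · exact Real.sqrt_le_sqrt ((hc l).hSqScalar_compCoef_le i)

end VectorFields

section BilinearForm

variable {u v : Coef}

theorem dotR_evec_fvec (m : Freq) : dotR (evec m) (fvec m) = 0 := by
  simp only [dotR, evec, fvec]; ring

/-- Since `u` is divergence-free, `(u·∇)v = div (u ⊗ v)`: in Fourier variables, `e_m·n = e_m·(m+n)`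
because `e_m·m = 0`. -/
theorem Bc_eq_sum (hu : FinHinf u) (hv : FinHinf v) (k : Freq) :
    Bc u v k = ∑ i, ∑ j,
      (evecC j k : ℂ) * partialD i (convC (compCoef i u) (compCoef j v)) k.1 := by
  have hsum (i j : Fin 2) : Summable fun m =>
      (evecC j k : ℂ) * (2 * Real.pi * Complex.I * coord i k.1 *
        (compCoef i u m * compCoef j v (k.1 - m))) :=
    (((hu.rapidDecay_compCoef i).convC_term (hv.rapidDecay_compCoef j)
      k.1).of_norm.mul_left _).mul_left _
  simp only [partialD, convC, ← tsum_mul_left]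
  rw [Bc, ← tsum_mul_left]
  simp only [← Summable.tsum_finsetSum fun j _ => hsum _ j]
  rw [← Summable.tsum_finsetSum fun i _ => summable_sum fun j _ => hsum i j,
    ← tsum_freq (by simp [compCoef_zero])]
  refine tsum_congr fun m => ?_
  by_cases hn : k.1 - m.1 = 0
  · simp [hn, compCoef_zero]
  have hdiv : dotR (evec m) (fvec ⟨k.1 - m.1, hn⟩) = dotR (evec m) (fvec k) := by
    have h := dotR_evec_fvec m
    simp only [dotR, fvec, Prod.fst_sub, Prod.snd_sub, Int.cast_sub] at h ⊢
    linear_combination -h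
  rw [dif_pos hn, hdiv]
  have hv' (j : Fin 2) := compCoef_freq j v ⟨k.1 - m.1, hn⟩
  simp only [hv', compCoef_freq, Fin.sum_univ_two, dotR, fvec, evecC, coord, if_true, one_ne_zero,
    if_false]
  push_cast
  ring

theorem sq_norm_Bc_le (hu : FinHinf u) (hv : FinHinf v) (k : Freq) :
    ‖Bc u v k‖ ^ 2 ≤
      lam k * ∑ i, ∑ j, ‖convC (compCoef i u) (compCoef j v) k.1‖ ^ 2 := by
  set a : Fin 2 × Fin 2 → ℝ := fun p => 2 * Real.pi * |(coord p.1 k.1 : ℝ)| * |evecC p.2 k|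
  set Z : Fin 2 × Fin 2 → ℝ := fun p => ‖convC (compCoef p.1 u) (compCoef p.2 v) k.1‖
  have hnorm : ‖Bc u v k‖ ≤ ∑ p, a p * Z p := by
    rw [Bc_eq_sum hu hv, ← Fintype.sum_prod_type']
    refine (norm_sum_le _ _).trans_eq (Finset.sum_congr rfl fun p _ => ?_)
    rw [norm_mul, norm_partialD, Complex.norm_real, Real.norm_eq_abs]
    ring
  have ha : ∑ p, a p ^ 2 = lam k := by
    have he := sum_sq_evecC k
    simp only [a, mul_pow, sq_abs, Fintype.sum_prod_type, ← Finset.mul_sum, he, mul_one]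
    simp only [Fin.sum_univ_two, coord, if_true, one_ne_zero, if_false, lam, knormSq]
    ring
  calc ‖Bc u v k‖ ^ 2 ≤ (∑ p, a p * Z p) ^ 2 := by gcongr
    _ ≤ (∑ p, a p ^ 2) * ∑ p, Z p ^ 2 := Finset.sum_mul_sq_le_sq_mul_sq _ _ _
    _ = _ := by rw [ha, Fintype.sum_prod_type]

theorem finH_Bc_and_hSq_le (hu : FinHinf u) (hv : FinHinf v) (α : ℝ) :
    FinH α (Bc u v) ∧ hSq α (Bc u v) ≤ hSqMat (α + 1) u v := by
  have hmat : HasSum (fun k : Freq => ∑ i, ∑ j,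
      lam k ^ (α + 1) * ‖convC (compCoef i u) (compCoef j v) k.1‖ ^ 2) (hSqMat (α + 1) u v) :=
    hasSum_sum fun i _ => hasSum_sum fun j _ =>
      (((hu.rapidDecay_compCoef i).convC (hv.rapidDecay_compCoef j)).summable_sobolev _).hasSum
  have hle (k : Freq) : lam k ^ α * ‖Bc u v k‖ ^ 2 ≤ ∑ i, ∑ j,
      lam k ^ (α + 1) * ‖convC (compCoef i u) (compCoef j v) k.1‖ ^ 2 := by
    have hk := lam_pos k
    simp only [← Finset.mul_sum]
    rw [Real.rpow_add hk, Real.rpow_one, mul_assoc]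
    gcongr
    exact sq_norm_Bc_le hu hv k
  have hfin : FinH α (Bc u v) := hmat.summable.of_nonneg_of_le
    (fun k => mul_nonneg (Real.rpow_nonneg (lam_pos k).le α) (sq_nonneg _)) hle
  exact ⟨hfin, (Summable.tsum_le_tsum hle hfin hmat.summable).trans_eq hmat.tsum_eq⟩

theorem hSqMat_comm (α : ℝ) (u v : Coef) : hSqMat α u v = hSqMat α v u := by
  unfold hSqMat
  rw [Finset.sum_comm]
  simp only [convC_comm]

theorem exists_sqrt_hSqMat_le (a : ℤ) : ∃ C > 0, ∀ u v, FinHinf u → FinHinf v →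
    √(hSqMat a u v) ≤ C * (bN a.natAbs u * hN a v) := by
  obtain ⟨C, hC, h⟩ := exists_hSqScalar_intCast_convC_le a
  refine ⟨√(4 * C), by positivity, fun u v hu hv => ?_⟩
  have hbu := bN_nonneg a.natAbs u
  have hcomp (i j : Fin 2) : hSqScalar a (convC (compCoef i u) (compCoef j v)) ≤
      C * bN a.natAbs u ^ 2 * hSq a v := by
    refine (h _ _ (hu.rapidDecay_compCoef i) (hv.rapidDecay_compCoef j) (compCoef_zero i u)
      (compCoef_zero j v)).trans ?_
    gcongr
    exacts [hSqScalar_nonneg a _, multNorm_nonneg _ _, hu.multNorm_compCoef_le _ i,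
      (hv a).hSqScalar_compCoef_le j]
  refine Real.sqrt_le_iff.2 ⟨mul_nonneg (by positivity) (mul_nonneg hbu (hN_nonneg _ v)), ?_⟩
  calc hSqMat a u v ≤ ∑ _i : Fin 2, ∑ _j : Fin 2, C * bN a.natAbs u ^ 2 * hSq a v := by
        unfold hSqMat; gcongr; exact hcomp _ _
    _ = _ := by
      rw [mul_pow, mul_pow, hN_sq, Real.sq_sqrt (by positivity)]
      simp only [Fin.sum_univ_two]
      ring

theorem abs_hInner_le {c d : Coef} {α β γ : ℝ} (hγ : α + β = 2 * γ) (hc : FinH α c)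
    (hd : FinH β d) : |hInner γ c d| ≤ hN α c * hN β d := by
  obtain ⟨hsum, hle⟩ := summable_lam_mul_and_tsum_le hγ (x := fun k => ‖c k‖)
    (y := fun k => ‖d k‖) (fun _ => norm_nonneg _) (fun _ => norm_nonneg _) hc hd
  refine le_trans ?_ hle
  rw [hInner, ← Real.norm_eq_abs]
  refine tsum_of_norm_bounded hsum.hasSum fun k => ?_
  have hk := Real.rpow_nonneg (lam_pos k).le γ
  rw [norm_mul, Real.norm_of_nonneg hk]
  gcongr
  exact (Complex.abs_re_le_norm _).trans_eq (by rw [norm_mul, Complex.norm_conj])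

theorem statement11_general (a : ℤ) :
    (∀ (α : ℝ) (u v : Coef), FinHinf u → FinHinf v →
      hN α (Bc u v) ≤ √(hSqMat (α + 1) u v)) ∧
    ∃ C : ℝ, 0 < C ∧ ∀ u v w : Coef, FinHinf u → FinHinf v → FinH (a + 1) w →
      |hInner a (Bc u v) w| ≤
        C * min (bN a.natAbs u * hN a v) (hN a u * bN a.natAbs v) * hN (a + 1) w := by
  refine ⟨fun α u v hu hv => Real.sqrt_le_sqrt (finH_Bc_and_hSq_le hu hv α).2, ?_⟩
  obtain ⟨C, hC, hmat⟩ := exists_sqrt_hSqMat_le a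
  refine ⟨C, hC, fun u v w hu hv hw => ?_⟩
  obtain ⟨hB, hB_le⟩ := finH_Bc_and_hSq_le hu hv (a - 1)
  rw [sub_add_cancel] at hB_le
  calc |hInner a (Bc u v) w| ≤ hN (a - 1) (Bc u v) * hN (a + 1) w :=
        abs_hInner_le (by ring) hB hw
    _ ≤ √(hSqMat a u v) * hN (a + 1) w :=
        mul_le_mul_of_nonneg_right (Real.sqrt_le_sqrt hB_le) (hN_nonneg _ w)
    _ ≤ _ := by
        refine mul_le_mul_of_nonneg_right ?_ (hN_nonneg _ w)
        rw [mul_min_of_nonneg _ _ hC.le, mul_comm (hN a u)]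
        exact le_min (hmat u v hu hv) (hSqMat_comm a u v ▸ hmat v u hv hu)

end BilinearForm

/-- Lemma `PropBilinearFormIdentities2`. For `a ∈ ℤ` and
smooth `u, v, w ∈ Ḣ^∞_⋄`: (i) `‖B[u,v]‖_{Ḣ^a} ≤ ‖u vᵀ‖_{Ḣ^{a+1}}`, where
`‖u vᵀ‖²_{Ḣ^{a+1}} = Σ_{i,j} ‖u_i v_j‖²_{Ḣ^{a+1}}`; (ii)
`|⟨B[u,v], w⟩_{Ḣ^a}| ≲ min{‖u‖_{B^{|a|}} ‖v‖_{Ḣ^a}, ‖u‖_{Ḣ^a} ‖v‖_{B^{|a|}}}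
 · ‖w‖_{Ḣ^{a+1}}`, with `B^ℓ = C^ℓ(Ω)²` for `ℓ ≤ 1` and `B^ℓ = Ḣ^ℓ` for
`ℓ ≥ 2`. -/
theorem statement11 (a : ℤ) :
    (∀ u v : Coef, MemHinf u → MemHinf v →
      hN (a : ℝ) (Bc u v) ≤ Real.sqrt (hSqMat ((a : ℝ) + 1) u v)) ∧
    (∃ C : ℝ, 0 < C ∧ ∀ u v w : Coef, MemHinf u → MemHinf v → MemHinf w →
      |hInner (a : ℝ) (Bc u v) w| ≤
        C * min (bN a.natAbs u * hN (a : ℝ) v) (hN (a : ℝ) u * bN a.natAbs v) *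
          hN ((a : ℝ) + 1) w) := by
  obtain ⟨h, C, hC, hinner⟩ := statement11_general a
  exact ⟨fun u v hu hv => h a u v hu.finHinf hv.finHinf, C, hC,
    fun u v w hu hv hw => hinner u v w hu.finHinf hv.finHinf (hw _).2⟩

end NS2D
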